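/- Let T > 0, C > 0, m ≥ 1, let (Ω, 𝒜, μ) be a probability space, and let H be the space of (equivalence classes of) functions [0,T] × Ω → ℝ^m that are square integrable with respect to the product of Lebesgue measure on [0,T] and μ. Set α := C + 4CT and suppose Θ : H → H satisfies: for all Γ¹, Γ² ∈ H and almost every s ∈ [0,T], ∫_Ω e^{αs}|Θ(Γ¹)(s,ω) − Θ(Γ²)(s,ω)|² dμ(ω) ≤ (2C/α) ∫_Ω ∫_s^T e^{αr}|Γ¹(r,ω) − Γ²(r,ω)|² dr dμ(ω). Then, with respect to the norm ‖z‖_α := (∫_0^T ∫_Ω e^{αs}|z(s,ω)|² dμ(ω) ds)^{1/2}, the map Θ is Lipschitz with constant at most 1/√2; in particular Θ admits a unique fixed point in H. -/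

import Mathlib

open MeasureTheory

section Helpers

variable {m : ℕ} {Ω : Type*} [MeasurableSpace Ω] (μ : Measure Ω) [IsProbabilityMeasure μ]

/-- The weighted squared distance, as an integral over the product. -/
noncomputable def wdist (T α : ℝ)
    (f g : Lp (EuclideanSpace ℝ (Fin m)) 2
      (((volume : Measure ℝ).restrict (Set.Icc 0 T)).prod μ)) : ℝ :=
  ∫ x, Real.exp (α * x.1) * ‖f x - g x‖ ^ 2 ∂(((volume : Measure ℝ).restrict (Set.Icc 0 T)).prod μ)

theorem ae_fst_mem (T : ℝ) :
    ∀ᵐ x ∂(((volume : Measure ℝ).restrict (Set.Icc 0 T)).prod μ), x.1 ∈ Set.Icc 0 T :=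
  Measure.quasiMeasurePreserving_fst.ae (ae_restrict_mem measurableSet_Icc)

theorem sq_integrable (T : ℝ)
    (f g : Lp (EuclideanSpace ℝ (Fin m)) 2
      (((volume : Measure ℝ).restrict (Set.Icc 0 T)).prod μ)) :
    Integrable (fun x => ‖f x - g x‖ ^ 2)
      (((volume : Measure ℝ).restrict (Set.Icc 0 T)).prod μ) :=
  ((Lp.memLp f).sub (Lp.memLp g)).integrable_norm_pow two_ne_zero

theorem w_integrable (T α : ℝ) (hα : 0 < α)
    (f g : Lp (EuclideanSpace ℝ (Fin m)) 2
      (((volume : Measure ℝ).restrict (Set.Icc 0 T)).prod μ)) :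
    Integrable (fun x : ℝ × Ω => Real.exp (α * x.1) * ‖f x - g x‖ ^ 2)
      (((volume : Measure ℝ).restrict (Set.Icc 0 T)).prod μ) := by
  refine (sq_integrable μ T f g).bdd_mul (c := Real.exp (α * T)) ?_ ?_
  · exact (by fun_prop : Measurable fun x : ℝ × Ω => Real.exp (α * x.1)).aestronglyMeasurable
  · filter_upwards [ae_fst_mem μ T] with x hx
    rw [Real.norm_of_nonneg (Real.exp_pos _).le]
    exact Real.exp_le_exp.2 (mul_le_mul_of_nonneg_left hx.2 hα.le)

theorem dist_sq_eq (T : ℝ)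
    (f g : Lp (EuclideanSpace ℝ (Fin m)) 2
      (((volume : Measure ℝ).restrict (Set.Icc 0 T)).prod μ)) :
    dist f g ^ 2 = ∫ x, ‖f x - g x‖ ^ 2
      ∂(((volume : Measure ℝ).restrict (Set.Icc 0 T)).prod μ) := by
  rw [dist_eq_norm, ← real_inner_self_eq_norm_sq, L2.inner_def]
  apply integral_congr_ae
  filter_upwards [Lp.coeFn_sub f g] with x hx
  rw [hx, real_inner_self_eq_norm_sq]
  rfl

theorem dist_sq_le_wdist (T α : ℝ) (hα : 0 < α)
    (f g : Lp (EuclideanSpace ℝ (Fin m)) 2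
      (((volume : Measure ℝ).restrict (Set.Icc 0 T)).prod μ)) :
    dist f g ^ 2 ≤ wdist μ T α f g := by
  rw [dist_sq_eq]
  refine integral_mono_ae (sq_integrable μ T f g) (w_integrable μ T α hα f g) ?_
  filter_upwards [ae_fst_mem μ T] with x hx
  exact le_mul_of_one_le_left (by positivity) (Real.one_le_exp (mul_nonneg hα.le hx.1))

theorem wdist_le_dist_sq (T α : ℝ) (hα : 0 < α)
    (f g : Lp (EuclideanSpace ℝ (Fin m)) 2
      (((volume : Measure ℝ).restrict (Set.Icc 0 T)).prod μ)) :
    wdist μ T α f g ≤ Real.exp (α * T) * dist f g ^ 2 := by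
  rw [dist_sq_eq, ← integral_const_mul]
  refine integral_mono_ae (w_integrable μ T α hα f g) ((sq_integrable μ T f g).const_mul _) ?_
  filter_upwards [ae_fst_mem μ T] with x hx
  exact mul_le_mul_of_nonneg_right
    (Real.exp_le_exp.2 (mul_le_mul_of_nonneg_left hx.2 hα.le)) (by positivity)

theorem wdist_eq (T α : ℝ) (hα : 0 < α)
    (f g : Lp (EuclideanSpace ℝ (Fin m)) 2
      (((volume : Measure ℝ).restrict (Set.Icc 0 T)).prod μ)) :
    wdist μ T α f g = ∫ s in Set.Icc (0 : ℝ) T,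
          (∫ ω, Real.exp (α * s) * ‖f (s, ω) - g (s, ω)‖ ^ 2 ∂μ) :=
  integral_prod _ (w_integrable μ T α hα f g)

theorem tail_le (T α : ℝ) (hα : 0 < α)
    (f g : Lp (EuclideanSpace ℝ (Fin m)) 2
      (((volume : Measure ℝ).restrict (Set.Icc 0 T)).prod μ)) (s : ℝ) (hs : 0 ≤ s) :
    ∫ ω, (∫ r in Set.Ioc s T, Real.exp (α * r) * ‖f (r, ω) - g (r, ω)‖ ^ 2) ∂μ
      ≤ wdist μ T α f g := by
  have hi := w_integrable μ T α hα f g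
  rw [wdist, integral_prod_symm _ hi]
  refine integral_mono_of_nonneg ?_ hi.integral_prod_right ?_
  · exact Filter.Eventually.of_forall fun ω => integral_nonneg fun r => by positivity
  · filter_upwards [hi.prod_left_ae] with ω hω
    refine setIntegral_mono_set hω ?_ ?_
    · exact Filter.Eventually.of_forall fun r => by positivity
    · exact Filter.Eventually.of_forall fun r hr => ⟨hs.trans hr.1.le, hr.2⟩

end Helpers

/-- If `Θ` on `H = L²([0,T] × Ω; ℝ^m)` satisfies, for `α = C + 4CT`, the pointwise-in-time
contraction estimate, then `Θ` is `1/√2`-Lipschitz for the weighted norm `‖·‖_α` and admits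
a unique fixed point in `H`. -/
theorem contraction_fixed_point {m : ℕ} (hm : 1 ≤ m)
    {Ω : Type*} [MeasurableSpace Ω] (μ : Measure Ω) [IsProbabilityMeasure μ]
    (T C α : ℝ) (hT : 0 < T) (hC : 0 < C) (hα : α = C + 4 * C * T)
    (Θ : Lp (EuclideanSpace ℝ (Fin m)) 2 (((volume : Measure ℝ).restrict (Set.Icc 0 T)).prod μ)
      → Lp (EuclideanSpace ℝ (Fin m)) 2 (((volume : Measure ℝ).restrict (Set.Icc 0 T)).prod μ))
    (hΘ : ∀ Γ₁ Γ₂, ∀ᵐ s ∂((volume : Measure ℝ).restrict (Set.Icc 0 T)),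
      ∫ ω, Real.exp (α * s) * ‖Θ Γ₁ (s, ω) - Θ Γ₂ (s, ω)‖ ^ 2 ∂μ ≤
        (2 * C / α) * ∫ ω, (∫ r in Set.Ioc s T,
          Real.exp (α * r) * ‖Γ₁ (r, ω) - Γ₂ (r, ω)‖ ^ 2) ∂μ) :
    (∀ Γ₁ Γ₂,
      Real.sqrt (∫ s in Set.Icc (0 : ℝ) T,
          (∫ ω, Real.exp (α * s) * ‖Θ Γ₁ (s, ω) - Θ Γ₂ (s, ω)‖ ^ 2 ∂μ)) ≤
        (1 / Real.sqrt 2) * Real.sqrt (∫ s in Set.Icc (0 : ℝ) T,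
          (∫ ω, Real.exp (α * s) * ‖Γ₁ (s, ω) - Γ₂ (s, ω)‖ ^ 2 ∂μ))) ∧
    (∃! Γ, Θ Γ = Γ) := by
  have hα0 : 0 < α := by rw [hα]; positivity
  have key : ∀ f g, wdist μ T α (Θ f) (Θ g) ≤ 1 / 2 * wdist μ T α f g := by
    intro f g
    have hN : 0 ≤ wdist μ T α f g := (sq_nonneg _).trans (dist_sq_le_wdist μ T α hα0 f g)
    have h1 : wdist μ T α (Θ f) (Θ g)
        ≤ ∫ s in Set.Icc (0 : ℝ) T, (2 * C / α) * wdist μ T α f g := by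
      rw [wdist_eq μ T α hα0 (Θ f)]
      refine integral_mono_ae (w_integrable μ T α hα0 (Θ f) (Θ g)).integral_prod_left
        (integrable_const _) ?_
      filter_upwards [hΘ f g, ae_restrict_mem measurableSet_Icc] with s hs hsm
      exact hs.trans (mul_le_mul_of_nonneg_left (tail_le μ T α hα0 f g s hsm.1) (by positivity))
    refine h1.trans ?_
    rw [setIntegral_const, smul_eq_mul, Real.volume_real_Icc_of_le hT.le, ← mul_assoc]
    refine mul_le_mul_of_nonneg_right ?_ hN
    rw [sub_zero, mul_div_assoc', div_le_iff₀ hα0, hα]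
    nlinarith
  refine ⟨fun f g => ?_, ?_⟩
  · rw [← wdist_eq μ T α hα0, ← wdist_eq μ T α hα0, ← Real.sqrt_one, ← Real.sqrt_div zero_le_one,
      ← Real.sqrt_mul (by norm_num)]
    exact Real.sqrt_le_sqrt (key f g)
  have iter : ∀ n : ℕ, ∀ f g, wdist μ T α (Θ^[n] f) (Θ^[n] g) ≤ (1 / 2) ^ n * wdist μ T α f g := by
    intro n f g
    induction n with
    | zero => simp
    | succ n ih =>
      rw [Function.iterate_succ_apply', Function.iterate_succ_apply', pow_succ']
      have := key (Θ^[n] f) (Θ^[n] g)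
      linarith
  obtain ⟨n, hn⟩ := exists_pow_lt_of_lt_one
    (show (0 : ℝ) < 1 / 4 * (Real.exp (α * T))⁻¹ by positivity) (show (1 / 2 : ℝ) < 1 by norm_num)
  have hn' : (1 / 2 : ℝ) ^ n * Real.exp (α * T) ≤ 1 / 4 := by
    have := mul_le_mul_of_nonneg_right hn.le (Real.exp_pos (α * T)).le
    rwa [mul_assoc, inv_mul_cancel₀ (Real.exp_pos _).ne', mul_one] at this
  have hc : ContractingWith (1 / 2) (Θ^[n]) := by
    refine ⟨by rw [← NNReal.coe_lt_coe]; norm_num, LipschitzWith.of_dist_le_mul fun f g => ?_⟩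
    have h1 := (dist_sq_le_wdist μ T α hα0 _ _).trans (iter n f g)
    have h2 := mul_le_mul_of_nonneg_left (wdist_le_dist_sq μ T α hα0 f g)
      (show (0 : ℝ) ≤ (1 / 2) ^ n by positivity)
    have h3 := mul_le_mul_of_nonneg_right hn' (sq_nonneg (dist f g))
    refine abs_le_of_sq_le_sq' ?_ (by positivity) |>.2
    push_cast
    nlinarith
  refine ⟨_, hc.isFixedPt_fixedPoint_iterate, fun g hg => ?_⟩
  exact hc.fixedPoint_unique (Function.IsFixedPt.iterate hg n)
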